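/- arXiv:2010.03748 — 2 statements merged into one kernel-verified Lean document; each statement's English description precedes it below -/
import Mathlib

section
/- Let G be a finite simple connected graph of order n, size m, maximum degree Δ, with p pendent vertices and minimum non-pendent vertex degree δ₁. Then AG(G) ≥ p(δ₁+1)/(2√δ₁) + (√(2(m−p)(Δ+δ₁)√(Δδ₁)) / (Δ(Δ+δ₁+2√(Δδ₁))))·√(F(G) + 2mΔ² − p(3Δ²+1)), with equality if and only if G is isomorphic to the star K_{1,n−1}, or G is regular, or G is (Δ,1)-semiregular. -/
open SimpleGraph

/-- The degree of a vertex, as a natural number (classical, to avoid decidability assumptions). -/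
noncomputable def ndeg {V : Type*} [Fintype V] (G : SimpleGraph V) (v : V) : ℕ :=
  letI := Classical.decRel G.Adj
  G.degree v

/-- The degree of a vertex, as a real number. -/
noncomputable def deg {V : Type*} [Fintype V] (G : SimpleGraph V) (v : V) : ℝ :=
  (ndeg G v : ℝ)

/-- For a symmetric function `f`, `edgeSum G f = Σ_{uv ∈ E(G)} f (d_u) (d_v)`:
each unordered edge is counted twice in the double sum, hence the factor `1/2`. -/
noncomputable def edgeSum {V : Type*} [Fintype V] (G : SimpleGraph V) (f : ℝ → ℝ → ℝ) : ℝ :=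
  letI := Classical.decRel G.Adj
  (1 / 2) * ∑ u : V, ∑ w : V, if G.Adj u w then f (deg G u) (deg G w) else 0

/-- The arithmetic-geometric index `AG(G) = Σ_{uv ∈ E(G)} (1/2)(√(d_u/d_v) + √(d_v/d_u))`. -/
noncomputable def AG {V : Type*} [Fintype V] (G : SimpleGraph V) : ℝ :=
  edgeSum G (fun x y => (Real.sqrt (x / y) + Real.sqrt (y / x)) / 2)

/-- The first geometric-arithmetic index `GA(G) = Σ_{uv ∈ E(G)} 2√(d_u d_v)/(d_u + d_v)`. -/
noncomputable def GA {V : Type*} [Fintype V] (G : SimpleGraph V) : ℝ :=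
  edgeSum G (fun x y => 2 * Real.sqrt (x * y) / (x + y))

/-- The forgotten index `F(G) = Σ_{uv ∈ E(G)} (d_u² + d_v²)`. -/
noncomputable def forgottenIndex {V : Type*} [Fintype V] (G : SimpleGraph V) : ℝ :=
  edgeSum G (fun x y => x ^ 2 + y ^ 2)

/-- The first Zagreb index `M₁(G) = Σ_{uv ∈ E(G)} (d_u + d_v)`. -/
noncomputable def M1 {V : Type*} [Fintype V] (G : SimpleGraph V) : ℝ :=
  edgeSum G (fun x y => x + y)

/-- The second Zagreb index `M₂(G) = Σ_{uv ∈ E(G)} d_u d_v`. -/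
noncomputable def M2 {V : Type*} [Fintype V] (G : SimpleGraph V) : ℝ :=
  edgeSum G (fun x y => x * y)

/-- The symmetric division deg index `SDD(G) = Σ_{uv ∈ E(G)} (d_u/d_v + d_v/d_u)`. -/
noncomputable def SDD {V : Type*} [Fintype V] (G : SimpleGraph V) : ℝ :=
  edgeSum G (fun x y => x / y + y / x)

/-- The atom-bond connectivity index `ABC(G) = Σ_{uv ∈ E(G)} √((d_u + d_v − 2)/(d_u d_v))`. -/
noncomputable def ABC {V : Type*} [Fintype V] (G : SimpleGraph V) : ℝ :=
  edgeSum G (fun x y => Real.sqrt ((x + y - 2) / (x * y)))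

/-- `G` is `(s,r)`-semiregular: its vertex set is the disjoint union of two nonempty sets,
all vertices of the first having degree `s` and all vertices of the second degree `r`. -/
def IsSemiregular {V : Type*} [Fintype V] (G : SimpleGraph V) (s r : ℕ) : Prop :=
  ∃ V₁ V₂ : Set V, V₁.Nonempty ∧ V₂.Nonempty ∧ Disjoint V₁ V₂ ∧ V₁ ∪ V₂ = Set.univ ∧
    (∀ v ∈ V₁, ndeg G v = s) ∧ (∀ v ∈ V₂, ndeg G v = r)

/-!
Write `ag(x, y) = (√(x/y) + √(y/x)) / 2`, so that `AG` is the sum of `ag(d_u, d_v)` over the edges.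
For positive `x`, `y` this equals `cosh ((log x - log y) / 2)`, and it is the ratio of their
arithmetic mean to their geometric mean. Comparing with the maximal case edge by edge gives
`F ≤ 2Δ²(m - p) + (Δ² + 1)p`, and for this extremal value of `F` the lower bound is
`κ⁻¹(m - p) + ag(δ₁, 1)p`, where `κ = ag(Δ + δ₁, 2√(Δδ₁)) ≥ 1`. On the other hand each of the
`m - p` non-pendent edges contributes at least `1 ≥ κ⁻¹` to `AG`, and each of the `p` pendent ones
at least `ag(δ₁, 1)`. If `δ₁ = Δ`, all these are equalities; if `δ₁ < Δ`, then `κ > 1` and any edge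
at a vertex of degree `Δ`, pendent or not, contributes strictly more than its share.
-/

section AgTerm

variable {x y : ℝ}

/-- The contribution to the arithmetic-geometric index of an edge whose ends have degrees `x` and
`y`. For positive `x` and `y` this is the ratio of their arithmetic mean to their geometric mean. -/
noncomputable def agTerm (x y : ℝ) : ℝ := (√(x / y) + √(y / x)) / 2

lemma agTerm_comm (x y : ℝ) : agTerm x y = agTerm y x := by
  rw [agTerm, agTerm, add_comm]

lemma agTerm_eq_div (hx : 0 < x) (hy : 0 < y) : agTerm x y = (x + y) / (2 * √(x * y)) := by
  rw [agTerm, Real.sqrt_div hx.le, Real.sqrt_div hy.le, Real.sqrt_mul hx.le]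
  field_simp
  rw [Real.sq_sqrt hx.le, Real.sq_sqrt hy.le]

lemma agTerm_eq_cosh (hx : 0 < x) (hy : 0 < y) :
    agTerm x y = Real.cosh ((Real.log x - Real.log y) / 2) := by
  have sqrt_div_eq_exp : ∀ {a b : ℝ}, 0 < a → 0 < b →
      √(a / b) = Real.exp ((Real.log a - Real.log b) / 2) := fun ha hb => by
    rw [Real.exp_half, Real.exp_sub, Real.exp_log ha, Real.exp_log hb]
  rw [agTerm, sqrt_div_eq_exp hx hy, sqrt_div_eq_exp hy hx, Real.cosh_eq, ← neg_div, neg_sub]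

lemma agTerm_self (hx : 0 < x) : agTerm x x = 1 := by
  rw [agTerm_eq_cosh hx hx, sub_self, zero_div, Real.cosh_zero]

lemma one_le_agTerm (hx : 0 < x) (hy : 0 < y) : 1 ≤ agTerm x y := by
  rw [agTerm_eq_cosh hx hy]
  exact Real.one_le_cosh _

lemma one_lt_agTerm (hx : 0 < x) (hy : 0 < y) (hxy : x ≠ y) : 1 < agTerm x y := by
  rw [agTerm_eq_cosh hx hy, Real.one_lt_cosh]
  exact div_ne_zero (sub_ne_zero.2 fun h => hxy (Real.log_injOn_pos hx hy h)) two_ne_zero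

lemma two_mul_sqrt_mul_lt_add (hx : 0 < x) (hy : 0 < y) (hxy : x ≠ y) :
    2 * √(x * y) < x + y := by
  have h := one_lt_agTerm hx hy hxy
  rwa [agTerm_eq_div hx hy, one_lt_div (by positivity)] at h

lemma strictMonoOn_agTerm_one : StrictMonoOn (fun x => agTerm x 1) (Set.Ici 1) := by
  intro x (hx : 1 ≤ x) y (hy : 1 ≤ y) hxy
  have hlog : Real.log x < Real.log y := Real.log_lt_log (by positivity) hxy
  simp only [agTerm_eq_cosh (zero_lt_one.trans_le hx) one_pos,
    agTerm_eq_cosh (zero_lt_one.trans_le hy) one_pos, Real.log_one, sub_zero]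
  exact Real.cosh_strictMonoOn (div_nonneg (Real.log_nonneg hx) two_pos.le)
    (div_nonneg (Real.log_nonneg hy) two_pos.le) (by linarith)

end AgTerm

section AgBound

variable {d D m p : ℝ}

/-- The lower bound for the arithmetic-geometric index of a graph with `m` edges, `p` pendent
vertices, least non-pendent degree `d`, largest degree `D` and forgotten index `F`. -/
noncomputable def agBound (d D m p F : ℝ) : ℝ :=
  p * (d + 1) / (2 * √d) +
    √(2 * (m - p) * (D + d) * √(D * d)) / (D * (D + d + 2 * √(D * d))) *
      √(F + 2 * m * D ^ 2 - p * (3 * D ^ 2 + 1))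

lemma monotone_agBound (hd : 0 ≤ d) (hD : 0 ≤ D) : Monotone (agBound d D m p) := by
  intro F F' hF
  unfold agBound
  gcongr

lemma agBound_extremal (hd : 0 < d) (hD : 0 < D) (hpm : p ≤ m) :
    agBound d D m p (2 * D ^ 2 * (m - p) + (D ^ 2 + 1) * p) =
      (agTerm (D + d) (2 * √(D * d)))⁻¹ * (m - p) + agTerm d 1 * p := by
  have : 0 ≤ m - p := sub_nonneg.2 hpm
  have hprod : √(2 * (m - p) * (D + d) * √(D * d)) * √(4 * D ^ 2 * (m - p)) =
      2 * D * (m - p) * √((D + d) * (2 * √(D * d))) := by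
    rw [← Real.sqrt_mul (by positivity), ← Real.sqrt_sq (by positivity : 0 ≤ 2 * D * (m - p)),
      ← Real.sqrt_mul (by positivity)]
    ring_nf
  have hrad : 2 * D ^ 2 * (m - p) + (D ^ 2 + 1) * p + 2 * m * D ^ 2 - p * (3 * D ^ 2 + 1) =
      4 * D ^ 2 * (m - p) := by ring
  rw [agBound, hrad, div_mul_eq_mul_div, hprod, agTerm_eq_div hd one_pos,
    agTerm_eq_div (by positivity) (by positivity), mul_one]
  field_simp
  ring

end AgBound

section Degrees

variable {V : Type*} [Fintype V] {G : SimpleGraph V}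

lemma ndeg_eq_degree (v : V) [Fintype (G.neighborSet v)] : ndeg G v = G.degree v := by
  unfold ndeg
  congr!

lemma ndeg_pos_iff_exists_adj {v : V} : 0 < ndeg G v ↔ ∃ w, G.Adj v w := by
  classical
  rw [ndeg_eq_degree, degree_pos_iff_exists_adj]

lemma ndeg_eq_one_iff_existsUnique_adj {v : V} : ndeg G v = 1 ↔ ∃! w, G.Adj v w := by
  classical
  rw [ndeg_eq_degree, degree_eq_one_iff_existsUnique_adj]

lemma deg_eq_one_iff {v : V} : deg G v = 1 ↔ ndeg G v = 1 := Nat.cast_eq_one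

lemma sum_deg : ∑ v, deg G v = 2 * (G.edgeSet.ncard : ℝ) := by
  classical
  have h := G.sum_degrees_eq_twice_card_edges
  rw [← Set.ncard_coe_finset, coe_edgeFinset] at h
  simp only [deg, ndeg_eq_degree]
  exact_mod_cast h

end Degrees

section EdgeSum

variable {V : Type*} [Fintype V] {G : SimpleGraph V} {f g : ℝ → ℝ → ℝ}

lemma edgeSum_le_edgeSum
    (h : ∀ u w, G.Adj u w → f (deg G u) (deg G w) ≤ g (deg G u) (deg G w)) :
    edgeSum G f ≤ edgeSum G g := by
  classical
  unfold edgeSum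
  gcongr with u _ w _
  split_ifs with huw
  · exact h u w huw
  · exact le_rfl

lemma edgeSum_lt_edgeSum
    (h : ∀ u w, G.Adj u w → f (deg G u) (deg G w) ≤ g (deg G u) (deg G w))
    {u w : V} (huw : G.Adj u w) (hlt : f (deg G u) (deg G w) < g (deg G u) (deg G w)) :
    edgeSum G f < edgeSum G g := by
  classical
  have hle : ∀ u w, (if G.Adj u w then f (deg G u) (deg G w) else 0) ≤
      if G.Adj u w then g (deg G u) (deg G w) else 0 := fun u w => by
    split_ifs with huw
    · exact h u w huw
    · exact le_rfl
  unfold edgeSum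
  refine mul_lt_mul_of_pos_left ?_ (by norm_num)
  refine Finset.sum_lt_sum (fun u _ => Finset.sum_le_sum fun w _ => hle u w)
    ⟨u, Finset.mem_univ u, Finset.sum_lt_sum (fun w _ => hle u w) ⟨w, Finset.mem_univ w, ?_⟩⟩
  simpa only [if_pos huw] using hlt

lemma edgeSum_add_eq_sum_deg_mul (f : ℝ → ℝ) :
    edgeSum G (fun x y => f x + f y) = ∑ v, deg G v * f (deg G v) := by
  classical
  have hleft : ∑ u, ∑ w, (if G.Adj u w then f (deg G u) else 0) =
      ∑ v, deg G v * f (deg G v) := Finset.sum_congr rfl fun u _ => by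
    rw [← Finset.sum_filter, Finset.sum_const, nsmul_eq_mul, deg, ndeg_eq_degree,
      ← card_neighborFinset_eq_degree, neighborFinset_eq_filter]
  have hright : ∑ u, ∑ w, (if G.Adj u w then f (deg G w) else 0) =
      ∑ v, deg G v * f (deg G v) := by
    rw [Finset.sum_comm, ← hleft]
    simp only [G.adj_comm]
  have hsplit : ∀ u w, (if G.Adj u w then f (deg G u) + f (deg G w) else 0) =
      (if G.Adj u w then f (deg G u) else 0) + if G.Adj u w then f (deg G w) else 0 :=
    fun u w => by split_ifs <;> simp only [add_zero]
  unfold edgeSum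
  simp only [hsplit, Finset.sum_add_distrib, hleft, hright]
  ring

end EdgeSum

section EndWeight

/-- The weight put on an end of degree `x` of an edge, chosen so that the weights of the two ends
add up to `b` on an edge with exactly one pendent end and to `a` on an edge with none. -/
noncomputable def endWeight (a b x : ℝ) : ℝ := a / 2 + if x = 1 then b - a else 0

variable {a b x y : ℝ}

lemma endWeight_add_endWeight (hx : x ≠ 1) (hy : y ≠ 1) :
    endWeight a b x + endWeight a b y = a := by
  rw [endWeight, endWeight, if_neg hx, if_neg hy]
  ring

lemma endWeight_add_endWeight_one (hx : x ≠ 1) : endWeight a b x + endWeight a b 1 = b := by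
  rw [endWeight, endWeight, if_neg hx, if_pos rfl]
  ring

variable {V : Type*} [Fintype V] {G : SimpleGraph V}

/-- The number `p` of pendent vertices. -/
noncomputable def pendentCount (G : SimpleGraph V) : ℕ := {v : V | ndeg G v = 1}.ncard

lemma edgeSum_endWeight (a b : ℝ) :
    edgeSum G (fun x y => endWeight a b x + endWeight a b y) =
      a * (G.edgeSet.ncard - pendentCount G) + b * pendentCount G := by
  classical
  have hweight : ∀ v, deg G v * endWeight a b (deg G v) =
      deg G v * (a / 2) + (b - a) * if ndeg G v = 1 then 1 else 0 := fun v => by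
    by_cases h : ndeg G v = 1
    · rw [endWeight, if_pos (deg_eq_one_iff.2 h), if_pos h, deg_eq_one_iff.2 h]
      ring
    · rw [endWeight, if_neg (mt deg_eq_one_iff.1 h), if_neg h]
      ring
  have hpendent : ∑ v, (if ndeg G v = 1 then (1 : ℝ) else 0) = pendentCount G := by
    rw [Finset.sum_boole, pendentCount, ← Set.ncard_coe_finset, Finset.coe_filter_univ]
  rw [edgeSum_add_eq_sum_deg_mul, Finset.sum_congr rfl fun v _ => hweight v,
    Finset.sum_add_distrib, ← Finset.sum_mul, ← Finset.mul_sum, sum_deg, hpendent]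
  ring

end EndWeight

section EdgeDegreesIn

variable {V : Type*} [Fintype V] {G : SimpleGraph V} {S : Set ℝ}

/-- The non-pendent ends of the edges of `G` have degrees in `S`, and no edge joins two pendent
vertices. This is all that is needed to bound an edge sum in terms of the numbers of edges and of
pendent vertices. -/
structure EdgeDegreesIn (G : SimpleGraph V) (S : Set ℝ) : Prop where
  one_notMem : 1 ∉ S
  cases_of_adj : ∀ u w, G.Adj u w →
    deg G u ∈ S ∧ (deg G w ∈ S ∨ deg G w = 1) ∨ deg G u = 1 ∧ deg G w ∈ S

namespace EdgeDegreesIn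

lemma rel_of_adj (h : EdgeDegreesIn G S) {r : ℝ → ℝ → Prop} (hsymm : ∀ x y, r x y → r y x)
    (hinner : ∀ x ∈ S, ∀ y ∈ S, r x y) (hpendent : ∀ x ∈ S, r x 1) (u w : V)
    (huw : G.Adj u w) : r (deg G u) (deg G w) := by
  rcases h.cases_of_adj u w huw with ⟨hu, hw | hw⟩ | ⟨hu, hw⟩
  · exact hinner _ hu _ hw
  · exact hw ▸ hpendent _ hu
  · exact hsymm _ _ (hu ▸ hpendent _ hw)

lemma ne_one (h : EdgeDegreesIn G S) {x : ℝ} (hx : x ∈ S) : x ≠ 1 :=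
  ne_of_mem_of_not_mem hx h.one_notMem

variable {f : ℝ → ℝ → ℝ} {a b : ℝ}

lemma endWeight_add_le (h : EdgeDegreesIn G S) (hf : ∀ x y, f x y = f y x)
    (hinner : ∀ x ∈ S, ∀ y ∈ S, a ≤ f x y) (hpendent : ∀ x ∈ S, b ≤ f x 1) (u w : V)
    (huw : G.Adj u w) :
    endWeight a b (deg G u) + endWeight a b (deg G w) ≤ f (deg G u) (deg G w) := by
  refine h.rel_of_adj (r := fun x y => endWeight a b x + endWeight a b y ≤ f x y)
    (fun x y hxy => by rwa [add_comm, hf]) (fun x hx y hy => ?_) (fun x hx => ?_) u w huw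
  · exact (endWeight_add_endWeight (h.ne_one hx) (h.ne_one hy)).trans_le (hinner x hx y hy)
  · exact (endWeight_add_endWeight_one (h.ne_one hx)).trans_le (hpendent x hx)

lemma le_edgeSum (h : EdgeDegreesIn G S) (hf : ∀ x y, f x y = f y x)
    (hinner : ∀ x ∈ S, ∀ y ∈ S, a ≤ f x y) (hpendent : ∀ x ∈ S, b ≤ f x 1) :
    a * (G.edgeSet.ncard - pendentCount G) + b * pendentCount G ≤ edgeSum G f := by
  rw [← edgeSum_endWeight]
  exact edgeSum_le_edgeSum (h.endWeight_add_le hf hinner hpendent)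

lemma lt_edgeSum (h : EdgeDegreesIn G S) (hf : ∀ x y, f x y = f y x)
    (hinner : ∀ x ∈ S, ∀ y ∈ S, a < f x y) (hpendent : ∀ x ∈ S, b ≤ f x 1) {u w : V}
    (huw : G.Adj u w) (hu : deg G u ∈ S) (hlt : b < f (deg G u) 1) :
    a * (G.edgeSet.ncard - pendentCount G) + b * pendentCount G < edgeSum G f := by
  rw [← edgeSum_endWeight]
  refine edgeSum_lt_edgeSum
    (h.endWeight_add_le hf (fun x hx y hy => (hinner x hx y hy).le) hpendent) huw ?_
  rcases h.cases_of_adj u w huw with ⟨-, hw | hw⟩ | ⟨hu1, -⟩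
  · rw [endWeight_add_endWeight (h.ne_one hu) (h.ne_one hw)]
    exact hinner _ hu _ hw
  · rwa [hw, endWeight_add_endWeight_one (h.ne_one hu)]
  · exact absurd hu1 (h.ne_one hu)

lemma edgeSum_le (h : EdgeDegreesIn G S) (hf : ∀ x y, f x y = f y x)
    (hinner : ∀ x ∈ S, ∀ y ∈ S, f x y ≤ a) (hpendent : ∀ x ∈ S, f x 1 ≤ b) :
    edgeSum G f ≤ a * (G.edgeSet.ncard - pendentCount G) + b * pendentCount G := by
  rw [← edgeSum_endWeight]
  refine edgeSum_le_edgeSum (h.rel_of_adj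
    (r := fun x y => f x y ≤ endWeight a b x + endWeight a b y)
    (fun x y hxy => by rwa [add_comm, hf]) (fun x hx y hy => ?_) (fun x hx => ?_))
  · exact (hinner x hx y hy).trans_eq (endWeight_add_endWeight (h.ne_one hx) (h.ne_one hy)).symm
  · exact (hpendent x hx).trans_eq (endWeight_add_endWeight_one (h.ne_one hx)).symm

lemma edgeSum_eq (h : EdgeDegreesIn G S) (hf : ∀ x y, f x y = f y x)
    (hinner : ∀ x ∈ S, ∀ y ∈ S, f x y = a) (hpendent : ∀ x ∈ S, f x 1 = b) :
    edgeSum G f = a * (G.edgeSet.ncard - pendentCount G) + b * pendentCount G :=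
  (h.edgeSum_le hf (fun x hx y hy => (hinner x hx y hy).le) fun x hx => (hpendent x hx).le).antisymm
    (h.le_edgeSum hf (fun x hx y hy => (hinner x hx y hy).ge) fun x hx => (hpendent x hx).ge)

lemma pendentCount_le (h : EdgeDegreesIn G S) : (pendentCount G : ℝ) ≤ G.edgeSet.ncard := by
  have hp := h.le_edgeSum (f := fun _ _ => 1) (a := 0) (b := 1) (fun _ _ => rfl)
    (fun _ _ _ _ => zero_le_one) fun _ _ => le_rfl
  have hm := h.edgeSum_le (f := fun _ _ => 1) (a := 1) (b := 1) (fun _ _ => rfl)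
    (fun _ _ _ _ => le_rfl) fun _ _ => le_rfl
  linarith

variable {d D : ℝ}

lemma forgottenIndex_le (h : EdgeDegreesIn G (Set.Icc d D)) (hd : 0 ≤ d) :
    forgottenIndex G ≤
      2 * D ^ 2 * (G.edgeSet.ncard - pendentCount G) + (D ^ 2 + 1) * pendentCount G := by
  have hsq : ∀ x ∈ Set.Icc d D, x ^ 2 ≤ D ^ 2 := fun x hx =>
    pow_le_pow_left₀ (hd.trans hx.1) hx.2 2
  refine h.edgeSum_le (fun x y => add_comm _ _) (fun x hx y hy => ?_) fun x hx => ?_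
  · linarith [hsq x hx, hsq y hy]
  · linarith [hsq x hx]

lemma agBound_lt_AG (h : EdgeDegreesIn G (Set.Icc d D)) (hd : 1 ≤ d) (hdD : d < D) {u : V}
    (hu : deg G u = D) :
    agBound d D G.edgeSet.ncard (pendentCount G) (forgottenIndex G) < AG G := by
  have hd0 : 0 < d := one_pos.trans_le hd
  have hD0 : 0 < D := hd0.trans hdD
  have hone : 1 < agTerm (D + d) (2 * √(D * d)) :=
    one_lt_agTerm (by positivity) (by positivity) (two_mul_sqrt_mul_lt_add hD0 hd0 hdD.ne').ne'
  obtain ⟨w, huw⟩ : ∃ w, G.Adj u w := by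
    rw [← ndeg_pos_iff_exists_adj, ← Nat.cast_pos (α := ℝ)]
    exact hD0.trans_eq hu.symm
  calc agBound d D G.edgeSet.ncard (pendentCount G) (forgottenIndex G)
      ≤ agBound d D G.edgeSet.ncard (pendentCount G)
          (2 * D ^ 2 * (G.edgeSet.ncard - pendentCount G) + (D ^ 2 + 1) * pendentCount G) :=
        monotone_agBound hd0.le hD0.le (h.forgottenIndex_le hd0.le)
    _ = (agTerm (D + d) (2 * √(D * d)))⁻¹ * (G.edgeSet.ncard - pendentCount G) +
          agTerm d 1 * pendentCount G := agBound_extremal hd0 hD0 h.pendentCount_le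
    _ < AG G := h.lt_edgeSum agTerm_comm
        (fun x hx y hy => (inv_lt_one_of_one_lt₀ hone).trans_le
          (one_le_agTerm (hd0.trans_le hx.1) (hd0.trans_le hy.1)))
        (fun x hx => strictMonoOn_agTerm_one.monotoneOn hd (hd.trans hx.1) hx.1)
        huw ⟨hdD.le.trans_eq hu.symm, hu.le⟩
        (hu ▸ strictMonoOn_agTerm_one hd (hd.trans hdD.le) hdD)

lemma AG_eq_agBound (h : EdgeDegreesIn G {d}) (hd : 0 < d) :
    AG G = agBound d d G.edgeSet.ncard (pendentCount G) (forgottenIndex G) := by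
  have hAG : AG G = 1 * (G.edgeSet.ncard - pendentCount G) + agTerm d 1 * pendentCount G := by
    refine h.edgeSum_eq agTerm_comm ?_ ?_
    · rintro x rfl y rfl
      exact agTerm_self hd
    · rintro x rfl
      rfl
  have hF : forgottenIndex G =
      2 * d ^ 2 * (G.edgeSet.ncard - pendentCount G) + (d ^ 2 + 1) * pendentCount G := by
    refine h.edgeSum_eq (fun x y => add_comm _ _) ?_ ?_
    · rintro x rfl y rfl
      ring
    · rintro x rfl
      ring
  rw [hAG, hF, agBound_extremal hd hd h.pendentCount_le, Real.sqrt_mul_self hd.le, ← two_mul,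
    agTerm_self (by positivity), inv_one]

end EdgeDegreesIn

end EdgeDegreesIn

section Extremal

variable {V : Type*} [Fintype V] {G : SimpleGraph V} {Δ δ₁ : ℕ}

lemma edgeDegreesIn_Icc (hedge : ∀ u w, G.Adj u w → ndeg G u = 1 → ndeg G w ≠ 1)
    (hΔ : IsGreatest (Set.range (ndeg G)) Δ)
    (hδ₁ : IsLeast {d : ℕ | ∃ v : V, ndeg G v = d ∧ 2 ≤ d} δ₁) :
    EdgeDegreesIn G (Set.Icc (δ₁ : ℝ) Δ) := by
  have hmem : ∀ {v z}, G.Adj v z → ndeg G v ≠ 1 → deg G v ∈ Set.Icc (δ₁ : ℝ) Δ := by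
    intro v z hvz hv
    have hpos : 0 < ndeg G v := ndeg_pos_iff_exists_adj.2 ⟨z, hvz⟩
    exact ⟨Nat.cast_le.2 (hδ₁.2 ⟨v, rfl, by omega⟩), Nat.cast_le.2 (hΔ.2 ⟨v, rfl⟩)⟩
  refine ⟨fun h => ?_, fun u w huw => ?_⟩
  · obtain ⟨-, -, h2⟩ := hδ₁.1
    have hδ₁_le : δ₁ ≤ 1 := by exact_mod_cast h.1
    omega
  · simp only [deg_eq_one_iff]
    by_cases hu : ndeg G u = 1
    · exact .inr ⟨hu, hmem huw.symm (hedge u w huw hu)⟩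
    · exact .inl ⟨hmem huw hu, or_iff_not_imp_right.2 (hmem huw.symm)⟩

lemma ndeg_inr_star {k : ℕ} (j : Fin k) :
    ndeg (completeBipartiteGraph (Fin 1) (Fin k)) (Sum.inr j) = 1 :=
  ndeg_eq_one_iff_existsUnique_adj.2 ⟨Sum.inl 0, by simp, by simp [Subsingleton.elim _ (0 : Fin 1)]⟩

lemma eq_of_ndeg_ne_one_of_iso_star {k : ℕ} (e : G ≃g completeBipartiteGraph (Fin 1) (Fin k))
    {u v : V} (hu : ndeg G u ≠ 1) (hv : ndeg G v ≠ 1) : u = v := by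
  classical
  have hcenter : ∀ x, ndeg G x ≠ 1 → e x = Sum.inl 0 := fun x hx => by
    rw [ndeg_eq_degree, ← e.degree_eq, ← ndeg_eq_degree] at hx
    rcases hex : e x with i | j
    · rw [Subsingleton.elim i 0]
    · exact absurd (ndeg_inr_star j) (hex ▸ hx)
  exact e.injective ((hcenter u hu).trans (hcenter v hv).symm)

lemma ndeg_eq_of_isSemiregular_one {s : ℕ} (h : IsSemiregular G s 1) {v : V} (hv : ndeg G v ≠ 1) :
    ndeg G v = s := by
  obtain ⟨V₁, V₂, -, -, -, hV, hs, h1⟩ := h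
  exact hs v ((hV ▸ Set.mem_univ v : v ∈ V₁ ∪ V₂).resolve_right fun hv₂ => hv (h1 v hv₂))

lemma regular_or_isSemiregular_one {s : ℕ} (hs : ∃ v, ndeg G v ≠ 1)
    (h : ∀ v, ndeg G v ≠ 1 → ndeg G v = s) :
    (∃ r, ∀ v, ndeg G v = r) ∨ IsSemiregular G s 1 := by
  by_cases hp : ∃ v, ndeg G v = 1
  · exact .inr ⟨{v | ndeg G v = 1}ᶜ, {v | ndeg G v = 1}, hs, hp, disjoint_compl_left,
      Set.compl_union_self _, h, fun _ => id⟩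
  · exact .inl ⟨s, fun v => h v fun hv => hp ⟨v, hv⟩⟩

lemma minNonpendentDegree_eq_maxDegree_iff (k : ℕ) (hpos : ∀ v, 0 < ndeg G v)
    (hΔ : IsGreatest (Set.range (ndeg G)) Δ)
    (hδ₁ : IsLeast {d : ℕ | ∃ v : V, ndeg G v = d ∧ 2 ≤ d} δ₁) :
    δ₁ = Δ ↔ Nonempty (G ≃g completeBipartiteGraph (Fin 1) (Fin k)) ∨
      (∃ r, ∀ v : V, ndeg G v = r) ∨ IsSemiregular G Δ 1 := by
  obtain ⟨a, ha⟩ := hΔ.1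
  obtain ⟨b, hb, hb2⟩ := hδ₁.1
  have ha2 : 2 ≤ ndeg G a := by rw [ha]; exact hb2.trans (hΔ.2 ⟨b, hb⟩)
  constructor
  · intro h
    refine .inr (regular_or_isSemiregular_one ⟨a, by omega⟩ fun v hv => ?_)
    have := hpos v
    exact (hΔ.2 ⟨v, rfl⟩).antisymm (h ▸ hδ₁.2 ⟨v, rfl, by omega⟩)
  · rintro (⟨⟨e⟩⟩ | ⟨r, hr⟩ | h)
    · rw [← ha, ← hb, eq_of_ndeg_ne_one_of_iso_star e (u := b) (v := a) (by omega) (by omega)]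
    · rw [← ha, ← hb, hr, hr]
    · rw [← hb, ndeg_eq_of_isSemiregular_one h (by omega : ndeg G b ≠ 1)]

end Extremal

section Connected

variable {V : Type*} [Fintype V] {G : SimpleGraph V}

lemma ndeg_pos_of_connected (hG : G.Connected) {v : V} (hv : ndeg G v ≠ 0) (u : V) :
    0 < ndeg G u := by
  obtain ⟨w, hvw⟩ := ndeg_pos_iff_exists_adj.1 (Nat.pos_of_ne_zero hv)
  have : Nontrivial V := ⟨v, w, hvw.ne⟩
  exact ndeg_pos_iff_exists_adj.2 (hG.preconnected.exists_adj_of_nontrivial u)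

lemma ndeg_ne_one_of_connected_of_adj (hG : G.Connected) {v : V} (hv : 2 ≤ ndeg G v) {u w : V}
    (huw : G.Adj u w) (hu : ndeg G u = 1) : ndeg G w ≠ 1 := by
  intro hw
  have hvS : v ∉ ({u, w} : Set V) := by rintro (rfl | rfl) <;> omega
  obtain ⟨walk⟩ := hG.preconnected u v
  obtain ⟨⟨⟨x, y⟩, hxy⟩, -, hx, hy⟩ := walk.exists_boundary_dart {u, w} (.inl rfl) hvS
  rcases hx with rfl | rfl
  · exact hy (.inr ((ndeg_eq_one_iff_existsUnique_adj.1 hu).unique hxy huw))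
  · exact hy (.inl ((ndeg_eq_one_iff_existsUnique_adj.1 hw).unique hxy huw.symm))

end Connected

theorem stmt6_general {V : Type*} [Fintype V] (G : SimpleGraph V) (hpos : ∀ v, 0 < ndeg G v)
    (hedge : ∀ u w, G.Adj u w → ndeg G u = 1 → ndeg G w ≠ 1) (Δ δ₁ : ℕ)
    (hΔ : IsGreatest (Set.range (ndeg G)) Δ)
    (hδ₁ : IsLeast {d : ℕ | ∃ v : V, ndeg G v = d ∧ 2 ≤ d} δ₁) :
    agBound δ₁ Δ G.edgeSet.ncard (pendentCount G) (forgottenIndex G) ≤ AG G ∧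
    (AG G = agBound δ₁ Δ G.edgeSet.ncard (pendentCount G) (forgottenIndex G) ↔
      Nonempty (G ≃g completeBipartiteGraph (Fin 1) (Fin (Fintype.card V - 1))) ∨
      (∃ r, ∀ v : V, ndeg G v = r) ∨ IsSemiregular G Δ 1) := by
  rw [← minNonpendentDegree_eq_maxDegree_iff _ hpos hΔ hδ₁]
  have hdeg := edgeDegreesIn_Icc hedge hΔ hδ₁
  obtain ⟨a, ha⟩ := hΔ.1
  obtain ⟨b, hb, hb2⟩ := hδ₁.1
  have hδΔ : δ₁ ≤ Δ := hΔ.2 ⟨b, hb⟩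
  rcases hδΔ.eq_or_lt with rfl | hlt
  · rw [Set.Icc_self] at hdeg
    have hAG := hdeg.AG_eq_agBound (Nat.cast_pos.2 (two_pos.trans_le hb2))
    exact ⟨hAG.ge, iff_of_true hAG rfl⟩
  · have hAG := hdeg.agBound_lt_AG (Nat.one_le_cast.2 (one_le_two.trans hb2))
      (Nat.cast_lt.2 hlt) (congrArg Nat.cast ha)
    exact ⟨hAG.le, iff_of_false hAG.ne' hlt.ne⟩

/-- Theorem 4 of the paper: lower bound on `AG` and characterization of equality. -/
theorem stmt6 {V : Type*} [Fintype V] (G : SimpleGraph V) (hG : G.Connected)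
    (n m p Δ δ₁ : ℕ)
    (hn : Fintype.card V = n) (hm : G.edgeSet.ncard = m)
    (hp : {v : V | ndeg G v = 1}.ncard = p)
    (hΔ : IsGreatest (Set.range (ndeg G)) Δ)
    (hδ₁ : IsLeast {d : ℕ | ∃ v : V, ndeg G v = d ∧ 2 ≤ d} δ₁) :
    AG G ≥ (p : ℝ) * ((δ₁ : ℝ) + 1) / (2 * Real.sqrt δ₁) +
      (Real.sqrt (2 * ((m : ℝ) - p) * ((Δ : ℝ) + δ₁) * Real.sqrt ((Δ : ℝ) * δ₁)) /
        ((Δ : ℝ) * ((Δ : ℝ) + δ₁ + 2 * Real.sqrt ((Δ : ℝ) * δ₁)))) *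
        Real.sqrt (forgottenIndex G + 2 * (m : ℝ) * (Δ : ℝ) ^ 2 -
          p * (3 * (Δ : ℝ) ^ 2 + 1)) ∧
    (AG G = (p : ℝ) * ((δ₁ : ℝ) + 1) / (2 * Real.sqrt δ₁) +
      (Real.sqrt (2 * ((m : ℝ) - p) * ((Δ : ℝ) + δ₁) * Real.sqrt ((Δ : ℝ) * δ₁)) /
        ((Δ : ℝ) * ((Δ : ℝ) + δ₁ + 2 * Real.sqrt ((Δ : ℝ) * δ₁)))) *
        Real.sqrt (forgottenIndex G + 2 * (m : ℝ) * (Δ : ℝ) ^ 2 -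
          p * (3 * (Δ : ℝ) ^ 2 + 1)) ↔
      Nonempty (G ≃g completeBipartiteGraph (Fin 1) (Fin (n - 1))) ∨
      (∃ r, ∀ v : V, ndeg G v = r) ∨ IsSemiregular G Δ 1) := by
  obtain ⟨b, rfl, hb⟩ := hδ₁.1
  subst hn hm hp
  exact stmt6_general G (ndeg_pos_of_connected hG (by omega : ndeg G b ≠ 0))
    (fun _ _ => ndeg_ne_one_of_connected_of_adj hG hb) Δ _ hΔ hδ₁
end

section
/- Let G be a finite simple graph and let e = v_i v_j be an edge of G with v_j a non-pendent vertex (d_j ≥ 2). Let d_max^(i) denote the maximum degree among the neighbors of v_i other than v_j (when d_i ≥ 2), and d_max^(j) the maximum degree among the neighbors of v_j other than v_i. If either (i) d_i > d_k for every neighbor v_k of v_i other than v_j and d_j > d_l for every neighbor v_l of v_j other than v_i (when v_i is pendent, the condition on v_i is considered vacuously satisfied), or (ii) T_i + (d_max^(j) − d_j + 1)/(2√(d_max^(j))·√(d_j)) ≤ (d_i + d_j)/√(d_i d_j), where T_i = (d_max^(i) − d_i + 1)/(2√(d_max^(i))·√(d_i)) if d_i ≥ 2 and T_i = 0 if v_i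 is a pendent vertex, then AG(G) > AG(G − e), where G − e is the graph obtained from G by deleting the edge e. -/
open SimpleGraph

/-!
Deleting `e = v_i v_j` removes the weight of `e` and lowers only the degrees of `v_i` and `v_j`, by
one each. So `AG(G) - AG(G - e)` is the weight of `e` plus the changes at the other edges through
`v_i` and through `v_j`.

The weight of an edge with end degrees `d ≥ k` increases with `d`, so under (i) neither change is
negative. In general, for `c < d`, lowering `d` to `c` raises that weight by an amount whose
`c`-fold is smaller than `(d - c)(k - c) / (4 √k √d)`, the gap being
`(√d - √c)² (k + c) / (4 √k √d)`. This bound increases with `k`, so taking `c = d - 1` and averaging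
over the `d - 1` other neighbours of `v_i` shows that the change there exceeds `-T_i / 2`, and
likewise at `v_j`. Under (ii) these losses add up to at most the weight of `e`; at a pendent `v_i`
nothing changes.
-/

/-- The weight `½(√(x/y) + √(y/x))` of an edge with end degrees `x` and `y` in the
arithmetic-geometric index. -/
noncomputable def agWeight (x y : ℝ) : ℝ :=
  (√(x / y) + √(y / x)) / 2

lemma agWeight_comm (x y : ℝ) : agWeight x y = agWeight y x :=
  congrArg (· / 2) (add_comm _ _)

lemma agWeight_pos {x y : ℝ} (hx : 0 < x) (hy : 0 < y) : 0 < agWeight x y := by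
  unfold agWeight
  positivity

lemma agWeight_eq {x y : ℝ} (hx : 0 < x) (hy : 0 < y) :
    agWeight x y = (x + y) / (2 * (√x * √y)) := by
  rw [agWeight, Real.sqrt_div hx.le, Real.sqrt_div hy.le]
  field_simp
  rw [Real.sq_sqrt hx.le, Real.sq_sqrt hy.le]

lemma agWeight_sub_agWeight {c d k : ℝ} (hc : 0 < c) (hd : 0 < d) (hk : 0 < k) :
    agWeight d k - agWeight c k = (√d - √c) * (√d * √c - k) / (2 * (√d * √c * √k)) := by
  rw [agWeight_eq hd hk, agWeight_eq hc hk]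
  field_simp
  linear_combination √d * Real.sq_sqrt hc.le - √c * Real.sq_sqrt hd.le

lemma agWeight_monotoneOn {k : ℝ} (hk : 0 < k) : MonotoneOn (agWeight · k) (Set.Ici k) := by
  intro c hkc d hkd hcd
  have hc : 0 < c := hk.trans_le hkc
  have hd : 0 < d := hk.trans_le hkd
  have hsqrt : √c ≤ √d := Real.sqrt_le_sqrt hcd
  have hk_le : k ≤ √d * √c := calc
    k ≤ c := hkc
    _ = √c * √c := (Real.mul_self_sqrt hc.le).symm
    _ ≤ √d * √c := by gcongr
  rw [← sub_nonneg, agWeight_sub_agWeight hc hd hk]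
  exact div_nonneg (mul_nonneg (sub_nonneg.2 hsqrt) (sub_nonneg.2 hk_le)) (by positivity)

lemma mul_agWeight_sub_agWeight_lt {c d k : ℝ} (hc : 0 < c) (hcd : c < d) (hk : 0 < k) :
    c * (agWeight c k - agWeight d k) < (d - c) * (k - c) / (4 * (√k * √d)) := by
  have hd : 0 < d := hc.trans hcd
  have hgap : (d - c) * (k - c) / (4 * (√k * √d)) - c * (agWeight c k - agWeight d k) =
      (√d - √c) ^ 2 * (k + c) / (4 * (√k * √d)) := by
    rw [← neg_sub (agWeight d k), agWeight_sub_agWeight hc hd hk]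
    field_simp
    linear_combination 2 * √c * (c - k) * Real.sq_sqrt hd.le +
      (2 * √c * (k - c + 2 * √d * (√d - √c)) - 4 * (√d - √c) * (√d * √c - k)) * Real.sq_sqrt hc.le
  have hsqrt : 0 < √d - √c := sub_pos.2 (Real.sqrt_lt_sqrt hc.le hcd)
  rw [← sub_pos, hgap]
  positivity

lemma sub_div_sqrt_monotoneOn {c : ℝ} (hc : 0 ≤ c) :
    MonotoneOn (fun k => (k - c) / √k) (Set.Ioi 0) := by
  intro k hk l _ hkl
  have hk' : 0 < √k := Real.sqrt_pos.2 hk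
  simp only [sub_div, Real.div_sqrt]
  gcongr

lemma mul_agWeight_sub_agWeight_lt_of_le {c d k D : ℝ} (hc : 0 < c) (hcd : c < d) (hk : 0 < k)
    (hkD : k ≤ D) :
    c * (agWeight c k - agWeight d k) < (d - c) * (D - c) / (4 * (√D * √d)) := calc
  _ < (d - c) * (k - c) / (4 * (√k * √d)) := mul_agWeight_sub_agWeight_lt hc hcd hk
  _ = (d - c) / (4 * √d) * ((k - c) / √k) := by ring
  _ ≤ (d - c) / (4 * √d) * ((D - c) / √D) :=
    mul_le_mul_of_nonneg_left (sub_div_sqrt_monotoneOn hc.le hk (hk.trans_le hkD) hkD)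
      (div_nonneg (sub_nonneg.2 hcd.le) (by positivity))
  _ = (d - c) * (D - c) / (4 * (√D * √d)) := by ring

lemma sum_sum_eq_of_symm_of_support {V R : Type*} [Fintype V] [CommRing R]
    {F : V → V → R} (hF : ∀ u w, F u w = F w u) {a b : V} (hab : a ≠ b)
    (hsupp : ∀ u w, u ≠ a → u ≠ b → w ≠ a → w ≠ b → F u w = 0) :
    ∑ u, ∑ w, F u w =
      2 * (∑ w, F a w + ∑ w, F b w - F a b) - F a a - F b b := by
  classical
  have hpair (g : V → R) : ∑ u, g u = g a + g b + ∑ u with u ≠ a ∧ u ≠ b, g u := by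
    rw [← Finset.sum_pair hab, ← Finset.sum_add_sum_compl {a, b}]
    congr 2
    ext u
    simp
  have hrow : ∑ u with u ≠ a ∧ u ≠ b, ∑ w, F u w =
      ∑ u with u ≠ a ∧ u ≠ b, F a u + ∑ u with u ≠ a ∧ u ≠ b, F b u := by
    rw [← Finset.sum_add_distrib]
    refine Finset.sum_congr rfl fun u hu => ?_
    obtain ⟨hua, hub⟩ := (Finset.mem_filter.1 hu).2
    rw [hpair, Finset.sum_eq_zero, add_zero, hF u a, hF u b]
    intro w hw
    obtain ⟨hwa, hwb⟩ := (Finset.mem_filter.1 hw).2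
    exact hsupp u w hua hub hwa hwb
  rw [hpair fun u => ∑ w, F u w, hrow, hpair (F a), hpair (F b), hF b a]
  ring

section Deletion

variable {V : Type*} (G : SimpleGraph V)

lemma deleteEdges_singleton_adj_left (a b w : V) :
    (G.deleteEdges {s(a, b)}).Adj a w ↔ G.Adj a w ∧ w ≠ b := by
  rw [deleteEdges_adj, Set.mem_singleton_iff, Sym2.congr_right]

lemma deleteEdges_singleton_adj_of_ne {a b u : V} (ha : u ≠ a) (hb : u ≠ b) (w : V) :
    (G.deleteEdges {s(a, b)}).Adj u w ↔ G.Adj u w := by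
  simp [deleteEdges_adj, ha, hb]

variable [Fintype V]

lemma ndeg_eq_card_filter (v : V) [DecidablePred (G.Adj v)] :
    ndeg G v = (Finset.univ.filter (G.Adj v)).card := by
  unfold ndeg
  rw [← card_neighborFinset_eq_degree, neighborFinset_eq_filter]
  congr

lemma ndeg_pos {u w : V} (h : G.Adj u w) : 0 < ndeg G u :=
  letI := Classical.decRel G.Adj
  h.degree_pos_left

lemma deg_pos {u w : V} (h : G.Adj u w) : 0 < deg G u :=
  Nat.cast_pos.2 (ndeg_pos G h)

open scoped Classical in
lemma card_filter_adj_ne {a b : V} (h : G.Adj a b) :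
    ((Finset.univ.filter fun w => G.Adj a w ∧ w ≠ b).card : ℝ) = deg G a - 1 := by
  have herase : (Finset.univ.filter fun w => G.Adj a w ∧ w ≠ b) =
      (Finset.univ.filter (G.Adj a)).erase b := by
    ext w
    simp [and_comm]
  rw [herase, Finset.cast_card_erase_of_mem (by simpa using h), deg, ndeg_eq_card_filter]

lemma deg_deleteEdges_left {a b : V} (h : G.Adj a b) :
    deg (G.deleteEdges {s(a, b)}) a = deg G a - 1 := by
  classical
  rw [← card_filter_adj_ne G h, deg, ndeg_eq_card_filter]
  simp only [deleteEdges_singleton_adj_left]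

lemma deg_deleteEdges_of_ne {a b u : V} (ha : u ≠ a) (hb : u ≠ b) :
    deg (G.deleteEdges {s(a, b)}) u = deg G u := by
  classical
  rw [deg, deg, ndeg_eq_card_filter, ndeg_eq_card_filter]
  simp only [deleteEdges_singleton_adj_of_ne G ha hb]

open scoped Classical in
/-- The summand of the double sum `edgeSum G f`. -/
noncomputable def edgeEntry (f : ℝ → ℝ → ℝ) (u w : V) : ℝ :=
  if G.Adj u w then f (deg G u) (deg G w) else 0

open scoped Classical in
/-- The total change of the terms of `edgeSum G f` at the edges `aw` with `w ≠ b` when the degree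
of `a` rises from `deg G a - 1` to `deg G a`. -/
noncomputable def incidentGain (f : ℝ → ℝ → ℝ) (a b : V) : ℝ :=
  ∑ w with G.Adj a w ∧ w ≠ b, (f (deg G a) (deg G w) - f (deg G a - 1) (deg G w))

variable {f : ℝ → ℝ → ℝ}

lemma edgeEntry_comm (hf : ∀ x y, f x y = f y x) (u w : V) :
    edgeEntry G f u w = edgeEntry G f w u := by
  classical
  exact if_congr (G.adj_comm u w) (hf _ _) rfl

lemma edgeEntry_self (u : V) : edgeEntry G f u u = 0 :=
  if_neg (G.irrefl)

lemma edgeEntry_deleteEdges_of_ne {a b u w : V} (hua : u ≠ a) (hub : u ≠ b) (hwa : w ≠ a)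
    (hwb : w ≠ b) : edgeEntry (G.deleteEdges {s(a, b)}) f u w = edgeEntry G f u w := by
  classical
  simp only [edgeEntry, deleteEdges_singleton_adj_of_ne G hua hub, deg_deleteEdges_of_ne G hua hub,
    deg_deleteEdges_of_ne G hwa hwb]

lemma sum_edgeEntry_sub_edgeEntry_deleteEdges {a b : V} (h : G.Adj a b) :
    ∑ w, (edgeEntry G f a w - edgeEntry (G.deleteEdges {s(a, b)}) f a w) =
      f (deg G a) (deg G b) + incidentGain G f a b := by
  classical
  have hentry (w : V) : edgeEntry G f a w - edgeEntry (G.deleteEdges {s(a, b)}) f a w =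
      (if w = b then f (deg G a) (deg G b) else 0) +
        if G.Adj a w ∧ w ≠ b then f (deg G a) (deg G w) - f (deg G a - 1) (deg G w) else 0 := by
    simp only [edgeEntry, deleteEdges_singleton_adj_left]
    by_cases hwb : w = b
    · simp [hwb, h]
    by_cases haw : G.Adj a w
    · simp [hwb, haw, deg_deleteEdges_left G h, deg_deleteEdges_of_ne G haw.ne' hwb]
    · simp [hwb, haw]
  simp only [hentry, Finset.sum_add_distrib, Finset.sum_ite_eq', Finset.mem_univ, if_true,
    incidentGain, Finset.sum_filter]

theorem edgeSum_sub_edgeSum_deleteEdges (hf : ∀ x y, f x y = f y x) {a b : V} (h : G.Adj a b) :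
    edgeSum G f - edgeSum (G.deleteEdges {s(a, b)}) f =
      f (deg G a) (deg G b) + incidentGain G f a b + incidentGain G f b a := by
  set G' := G.deleteEdges {s(a, b)} with hG'
  have hedgeSum (H : SimpleGraph V) : edgeSum H f = 1 / 2 * ∑ u, ∑ w, edgeEntry H f u w := rfl
  have hrow_a : ∑ w, (edgeEntry G f a w - edgeEntry G' f a w) =
      f (deg G a) (deg G b) + incidentGain G f a b :=
    sum_edgeEntry_sub_edgeEntry_deleteEdges G h
  have hrow_b : ∑ w, (edgeEntry G f b w - edgeEntry G' f b w) =
      f (deg G a) (deg G b) + incidentGain G f b a := by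
    rw [hG', Sym2.eq_swap, hf]
    exact sum_edgeEntry_sub_edgeEntry_deleteEdges G h.symm
  have hentry : edgeEntry G f a b - edgeEntry G' f a b = f (deg G a) (deg G b) := by
    simp [edgeEntry, G', h]
  have hsum := sum_sum_eq_of_symm_of_support
    (F := fun u w => edgeEntry G f u w - edgeEntry G' f u w)
    (fun u w => by rw [edgeEntry_comm G hf, edgeEntry_comm G' hf]) h.ne
    fun u w hua hub hwa hwb => sub_eq_zero.2 (edgeEntry_deleteEdges_of_ne G hua hub hwa hwb).symm
  simp only [hrow_a, hrow_b, hentry, edgeEntry_self, Finset.sum_sub_distrib] at hsum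
  rw [hedgeSum, hedgeSum, ← mul_sub, hsum]
  ring

lemma incidentGain_eq_zero_of_ndeg_lt_two {a b : V} (h : G.Adj a b) (ha : ndeg G a < 2) :
    incidentGain G f a b = 0 := by
  classical
  have hdeg : ndeg G a = 1 := by have := ndeg_pos G h; omega
  have hcard := card_filter_adj_ne G h
  rw [deg, hdeg, Nat.cast_one, sub_self, Nat.cast_eq_zero, Finset.card_eq_zero] at hcard
  rw [incidentGain, hcard, Finset.sum_empty]

lemma incidentGain_agWeight_nonneg {a b : V}
    (hlt : ∀ u, G.Adj a u → u ≠ b → ndeg G u < ndeg G a) :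
    0 ≤ incidentGain G agWeight a b := by
  classical
  refine Finset.sum_nonneg fun w hw => sub_nonneg.2 ?_
  obtain ⟨haw, hwb⟩ := (Finset.mem_filter.1 hw).2
  have hle : deg G w ≤ deg G a - 1 := by
    rw [le_sub_iff_add_le, deg, deg]
    exact_mod_cast hlt w haw hwb
  exact agWeight_monotoneOn (deg_pos G haw.symm) hle (hle.trans (sub_one_lt _).le) (sub_one_lt _).le

lemma neg_lt_incidentGain {a b : V} (h : G.Adj a b) (ha : 2 ≤ ndeg G a) {t : ℝ}
    (ht : ∀ u, G.Adj a u → u ≠ b →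
      (deg G a - 1) * (f (deg G a - 1) (deg G u) - f (deg G a) (deg G u)) < t) :
    -t < incidentGain G f a b := by
  classical
  set d := deg G a
  have hd : 0 < d - 1 := sub_pos.2 (Nat.one_lt_cast.2 ha)
  have hcard : (Finset.card {w | G.Adj a w ∧ w ≠ b} : ℝ) = d - 1 := card_filter_adj_ne G h
  have hne : ({w | G.Adj a w ∧ w ≠ b} : Finset V).Nonempty := by
    rw [← Finset.card_pos, ← Nat.cast_pos (α := ℝ), hcard]
    exact hd
  have hterm : ∀ w ∈ ({w | G.Adj a w ∧ w ≠ b} : Finset V),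
      -t / (d - 1) < f d (deg G w) - f (d - 1) (deg G w) := by
    intro w hw
    obtain ⟨haw, hwb⟩ := (Finset.mem_filter.1 hw).2
    rw [div_lt_iff₀ hd]
    linarith [ht w haw hwb]
  calc -t = ∑ w with G.Adj a w ∧ w ≠ b, -t / (d - 1) := by
        rw [Finset.sum_const, nsmul_eq_mul, hcard, mul_div_cancel₀ _ hd.ne']
    _ < incidentGain G f a b := Finset.sum_lt_sum_of_nonempty hne hterm

lemma neg_lt_incidentGain_agWeight {a b : V} (h : G.Adj a b) (ha : 2 ≤ ndeg G a) {D : ℝ}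
    (hD : ∀ u, G.Adj a u → u ≠ b → deg G u ≤ D) :
    -((D - deg G a + 1) / (2 * √D * √(deg G a)) / 2) < incidentGain G agWeight a b := by
  refine neg_lt_incidentGain G h ha fun u hau hub => ?_
  have hd : 0 < deg G a - 1 := sub_pos.2 (Nat.one_lt_cast.2 ha)
  convert mul_agWeight_sub_agWeight_lt_of_le hd (sub_one_lt _) (deg_pos G hau.symm)
    (hD u hau hub) using 1
  ring

end Deletion

/-- Theorem 14 of the paper: sufficient conditions for `AG(G) > AG(G − e)` when `e = v_i v_j`
is an edge with non-pendent vertex `v_j` (the term `T_i` is stipulated to be `0` when `v_i`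
is a pendent vertex). -/
theorem stmt19 {V : Type*} [Fintype V] (G : SimpleGraph V) (vi vj : V)
    (he : G.Adj vi vj) (hvj : 2 ≤ ndeg G vj)
    (dmaxi dmaxj : ℕ)
    (hdmaxi : 2 ≤ ndeg G vi →
      IsGreatest {d : ℕ | ∃ u, G.Adj vi u ∧ u ≠ vj ∧ ndeg G u = d} dmaxi)
    (hdmaxj : IsGreatest {d : ℕ | ∃ u, G.Adj vj u ∧ u ≠ vi ∧ ndeg G u = d} dmaxj)
    (hcond :
      ((∀ u, G.Adj vi u → u ≠ vj → ndeg G u < ndeg G vi) ∧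
        (∀ u, G.Adj vj u → u ≠ vi → ndeg G u < ndeg G vj)) ∨
      (if 2 ≤ ndeg G vi then
          ((dmaxi : ℝ) - (ndeg G vi : ℝ) + 1) /
            (2 * Real.sqrt (dmaxi : ℝ) * Real.sqrt (ndeg G vi : ℝ))
        else 0) +
        ((dmaxj : ℝ) - (ndeg G vj : ℝ) + 1) /
          (2 * Real.sqrt (dmaxj : ℝ) * Real.sqrt (ndeg G vj : ℝ)) ≤
        ((ndeg G vi : ℝ) + (ndeg G vj : ℝ)) /
          Real.sqrt ((ndeg G vi : ℝ) * (ndeg G vj : ℝ))) :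
    AG (G.deleteEdges {s(vi, vj)}) < AG G := by
  rw [← sub_pos]
  change 0 < edgeSum G agWeight - edgeSum _ agWeight
  rw [edgeSum_sub_edgeSum_deleteEdges G agWeight_comm he]
  have hi := deg_pos G he
  have hj := deg_pos G he.symm
  rcases hcond with ⟨hlti, hltj⟩ | hle
  · have hgain_i := incidentGain_agWeight_nonneg G hlti
    have hgain_j := incidentGain_agWeight_nonneg G hltj
    linarith [agWeight_pos hi hj]
  · have hgain_j := neg_lt_incidentGain_agWeight G he.symm hvj
      fun u hu hne => Nat.cast_le.2 (hdmaxj.2 ⟨u, hu, hne, rfl⟩)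
    have hgain_i : -((if 2 ≤ ndeg G vi then (dmaxi - deg G vi + 1) / (2 * √dmaxi * √(deg G vi))
        else 0) / 2) ≤ incidentGain G agWeight vi vj := by
      split_ifs with hdi
      · exact (neg_lt_incidentGain_agWeight G he hdi
          fun u hu hne => Nat.cast_le.2 ((hdmaxi hdi).2 ⟨u, hu, hne, rfl⟩)).le
      · simp [incidentGain_eq_zero_of_ndeg_lt_two G he (not_le.1 hdi)]
    have hweight : agWeight (deg G vi) (deg G vj) =
        (deg G vi + deg G vj) / √(deg G vi * deg G vj) / 2 := by
      rw [agWeight_eq hi hj, Real.sqrt_mul hi.le, div_div, mul_comm 2]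
    unfold deg at *
    linarith
end
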